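/- Let {b_k} be a sequence of integers with |b_k| ≥ 2, N ≥ 2 a prime, and {t_k} a sequence of nonzero integers. Define s_k = τ_N(b_1 b_2 ⋯ b_k) − τ_N(N t_k), where τ_N(A) = max{j ∈ ℕ : N^j | A}, and let D_k = {0,1,...,N−1} t_k. Then for every k ≥ 1, the set D_k ⊕ b_k D_{k−1} ⊕ b_k b_{k−1} D_{k−2} ⊕ ⋯ ⊕ b_k b_{k−1}⋯b_2 D_1 is a direct sum and an integer tile (i.e., tiles ℤ by translations) if and only if s_i ≠ s_j for all i ≠ j in ℕ⁺. -/

import Mathlib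

lemma aux_decomp (N : ℕ) (hN : N.Prime) (x : ℤ) (hx : x ≠ 0) :
    ∃ u : ℤ, x = (N : ℤ) ^ padicValInt N x * u ∧ IsCoprime u (N : ℤ) := by
  have := Fact.mk hN
  obtain ⟨u, hu⟩ := padicValInt_dvd (p := N) x
  refine ⟨u, hu, ?_⟩
  have hp : Prime (N : ℤ) := Nat.prime_iff_prime_int.mp hN
  refine ((hp.coprime_iff_not_dvd).2 ?_).symm
  rintro ⟨w, hw⟩
  have h1 : (N : ℤ) ^ (padicValInt N x + 1) ∣ x := ⟨w, by rw [pow_succ, mul_assoc, ← hw]; exact hu⟩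
  rw [padicValInt_dvd_iff] at h1
  rcases h1 with h1 | h1
  · exact hx h1
  · omega

lemma aux_solve (N : ℕ) (hN : N.Prime) (u q : ℤ) (hu : IsCoprime u (N : ℤ)) :
    ∃ (i : Fin N) (w : ℤ), q = u * ((i : ℕ) : ℤ) + N * w := by
  obtain ⟨x, y, hxy⟩ := hu
  have hpos : (0 : ℤ) < N := by exact_mod_cast hN.pos
  have h0 := Int.emod_nonneg (q * x) hpos.ne'
  have h1 := Int.emod_lt_of_pos (q * x) hpos
  refine ⟨⟨((q * x) % N).toNat, by omega⟩, q * y + u * ((q * x) / N), ?_⟩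
  have h2 := Int.mul_ediv_add_emod (q * x) N
  have h3 : (((q * x) % N).toNat : ℤ) = (q * x) % N := Int.toNat_of_nonneg h0
  simp only [h3]
  linear_combination (-q) * hxy - u * h2

lemma aux_uniq (N : ℕ) (u : ℤ) (hu : IsCoprime u (N : ℤ)) (i j : Fin N) (w w' : ℤ)
    (h : u * ((i : ℕ) : ℤ) + N * w = u * ((j : ℕ) : ℤ) + N * w') : i = j := by
  have h1 : (N : ℤ) ∣ u * (((i : ℕ) : ℤ) - ((j : ℕ) : ℤ)) := ⟨w' - w, by linear_combination h⟩
  have h2 := hu.symm.dvd_of_dvd_mul_left h1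
  have h3 : (((i : ℕ) : ℤ) - ((j : ℕ) : ℤ)) = 0 := by
    apply Int.eq_zero_of_abs_lt_dvd h2
    have := i.2
    have := j.2
    rw [abs_lt]; constructor <;> omega
  ext; omega

lemma aux_bij (N : ℕ) (hN : N.Prime) (a : ℕ → ℤ)
    (ha : ∀ m, ∃ u : ℤ, a m = (N : ℤ) ^ m * u ∧ IsCoprime u (N : ℤ)) (M : ℕ) :
    Function.Bijective (fun p : (Fin M → Fin N) × ℤ =>
      ∑ m : Fin M, a m * ((p.1 m : ℕ) : ℤ) + (N : ℤ) ^ M * p.2) := by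
  have hpos : (N : ℤ) ≠ 0 := by exact_mod_cast hN.ne_zero
  induction M with
  | zero =>
    constructor
    · rintro ⟨l, q⟩ ⟨l', q'⟩ h
      simp at h
      exact Prod.ext (Subsingleton.elim _ _) h
    · intro z
      exact ⟨⟨Fin.elim0, z⟩, by simp⟩
  | succ M ih =>
    obtain ⟨u, hau, hu⟩ := ha M
    constructor
    · rintro ⟨l, q⟩ ⟨l', q'⟩ h
      simp only [Fin.sum_univ_castSucc, Fin.val_castSucc, Fin.val_last, hau] at h
      have h1 := @ih.1 (fun m => l m.castSucc, u * ((l (Fin.last M) : ℕ) : ℤ) + N * q)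
        (fun m => l' m.castSucc, u * ((l' (Fin.last M) : ℕ) : ℤ) + N * q')
        (by simp only; linear_combination h)
      rw [Prod.mk.injEq] at h1
      have h2 := aux_uniq N u hu _ _ _ _ h1.2
      have h3 : q = q' := by
        have := h1.2
        rw [h2] at this
        exact mul_left_cancel₀ hpos (add_left_cancel this)
      refine Prod.ext ?_ h3
      funext m
      refine Fin.lastCases h2 (fun m => congrFun h1.1 m) m
    · intro z
      obtain ⟨⟨l, q⟩, h⟩ := ih.2 z
      obtain ⟨i, w, hq⟩ := aux_solve N hN u q hu
      refine ⟨(Fin.snoc (α := fun _ => Fin N) l i, w), ?_⟩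
      simp only [Fin.sum_univ_castSucc, Fin.snoc_castSucc, Fin.snoc_last, Fin.val_castSucc,
        Fin.val_last, hau]
      simp only at h
      rw [← h, hq]; ring

lemma aux_scale (N : ℕ) (hN : N.Prime) {α : Type*} (a r : ℤ) (f : α → ℤ)
    (hr : IsCoprime r (N : ℤ))
    (h : Function.Bijective (fun p : Fin N × α => a * ((p.1 : ℕ) : ℤ) + f p.2)) :
    Function.Bijective (fun p : Fin N × α => a * r * ((p.1 : ℕ) : ℤ) + f p.2) := by
  have hpos := hN.pos
  have inj : ∀ (i j : Fin N) (x y : α),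
      a * ((i : ℕ) : ℤ) + f x = a * ((j : ℕ) : ℤ) + f y → i = j ∧ x = y := by
    intro i j x y hh
    have := @h.1 (i, x) (j, y) hh
    exact Prod.mk.inj this
  have surj : ∀ z, ∃ (i : Fin N) (x : α), a * ((i : ℕ) : ℤ) + f x = z := by
    intro z
    obtain ⟨⟨i, x⟩, hh⟩ := h.2 z
    exact ⟨i, x, hh⟩
  have fwd : ∀ x, ∃ y, f y = f x + N * a := by
    intro x
    obtain ⟨i, y, hh⟩ := surj (f x + N * a)
    by_cases hi : (i : ℕ) = 0
    · exact ⟨y, by rw [← hh, hi]; simp⟩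
    · exfalso
      have hi2 := i.2
      have hc : ((N - (i : ℕ) : ℕ) : ℤ) = N - ((i : ℕ) : ℤ) := by
        rw [Nat.cast_sub hi2.le]
      have := (inj ⟨N - i, by omega⟩ ⟨0, hpos⟩ x y (by
        simp only [hc]; push_cast; linear_combination -hh)).1
      have := congrArg Fin.val this
      simp only at this
      omega
  have bwd : ∀ x, ∃ y, f y = f x - N * a := by
    intro x
    obtain ⟨i, y, hh⟩ := surj (f x - N * a)
    obtain ⟨y', hy'⟩ := fwd y
    have := (inj i ⟨0, hpos⟩ y' x (by rw [hy']; push_cast; linear_combination hh)).1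
    refine ⟨y, ?_⟩
    rw [← hh, this]; simp
  have per : ∀ (n : ℤ) (x : α), ∃ y, f y = f x + N * a * n := by
    intro n x
    induction n using Int.induction_on with
    | zero => exact ⟨x, by simp⟩
    | succ n ih =>
      obtain ⟨y, hy⟩ := ih
      obtain ⟨y', hy'⟩ := fwd y
      exact ⟨y', by rw [hy', hy]; ring⟩
    | pred n ih =>
      obtain ⟨y, hy⟩ := ih
      obtain ⟨y', hy'⟩ := bwd y
      exact ⟨y', by rw [hy', hy]; ring⟩
  constructor
  · rintro ⟨i, x⟩ ⟨i', x'⟩ hh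
    simp only at hh
    obtain ⟨v, q, hv⟩ := aux_solve N hN 1 (r * ((i : ℕ) : ℤ)) isCoprime_one_left
    obtain ⟨v', q', hv'⟩ := aux_solve N hN 1 (r * ((i' : ℕ) : ℤ)) isCoprime_one_left
    obtain ⟨y, hy⟩ := per q x
    obtain ⟨y', hy'⟩ := per q' x'
    have h1 := (inj v v' y y' (by
      rw [hy, hy']; linear_combination hh - a * hv + a * hv')).1
    have h2 : i = i' := by
      apply aux_uniq N r hr i i' (-q) (-q')
      rw [hv, hv', h1]; ring
    subst h2
    have := (inj ⟨0, hpos⟩ ⟨0, hpos⟩ x x' (by linear_combination hh)).2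
    rw [this]
  · intro z
    obtain ⟨i, x, hh⟩ := surj z
    obtain ⟨j, w, hj⟩ := aux_solve N hN r ((i : ℕ) : ℤ) hr
    obtain ⟨y, hy⟩ := per w x
    refine ⟨(j, y), ?_⟩
    simp only
    rw [hy, ← hh, hj]; ring

/-- Scaling one coefficient. -/
lemma aux_update (N : ℕ) (hN : N.Prime) {ι : Type*} [Fintype ι] [DecidableEq ι] (c : ι → ℤ)
    (L : Set ℤ) (i : ι) (r : ℤ) (hr : IsCoprime r (N : ℤ))
    (h : Function.Bijective (fun p : (ι → Fin N) × L =>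
      ∑ j, c j * ((p.1 j : ℕ) : ℤ) + (p.2 : ℤ))) :
    Function.Bijective (fun p : (ι → Fin N) × L =>
      ∑ j, (Function.update c i (c i * r)) j * ((p.1 j : ℕ) : ℤ) + (p.2 : ℤ)) := by
  let E : (ι → Fin N) × L ≃ Fin N × (({j // j ≠ i} → Fin N) × L) :=
    ((Equiv.funSplitAt i (Fin N)).prodCongr (Equiv.refl L)).trans (Equiv.prodAssoc _ _ _)
  let f : (({j // j ≠ i} → Fin N) × L) → ℤ := fun p =>
    ∑ j : {j // j ≠ i}, c j * ((p.1 j : ℕ) : ℤ) + (p.2 : ℤ)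
  have key : ∀ (d : ι → ℤ), (∀ j, j ≠ i → d j = c j) →
      (fun p : (ι → Fin N) × L => ∑ j, d j * ((p.1 j : ℕ) : ℤ) + (p.2 : ℤ)) =
      (fun p : Fin N × (({j // j ≠ i} → Fin N) × L) => d i * ((p.1 : ℕ) : ℤ) + f p.2) ∘ E := by
    intro d hd
    funext p
    have h1 : ∑ j, d j * ((p.1 j : ℕ) : ℤ) = d i * ((p.1 i : ℕ) : ℤ) +
        ∑ j : {j // j ≠ i}, c j * ((p.1 j : ℕ) : ℤ) := by
      rw [Fintype.sum_eq_add_sum_subtype_ne _ i]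
      congr 1
      exact Finset.sum_congr rfl (fun j _ => by rw [hd j j.2])
    simp only [h1, Function.comp, E, f, Equiv.trans_apply, Equiv.prodCongr_apply, Prod.map,
      Equiv.prodAssoc_apply, Equiv.funSplitAt_apply, Equiv.refl_apply]
    ring
  rw [key c (fun _ _ => rfl), Equiv.bijective_comp] at h
  rw [key _ (fun j hj => Function.update_of_ne hj _ _), Equiv.bijective_comp]
  simp only [Function.update_self]
  exact aux_scale N hN _ r f hr h

lemma aux_exists (N : ℕ) (hN : N.Prime) (n : ℕ) (c : Fin n → ℤ) (e : Fin n → ℕ)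
    (he : Function.Injective e)
    (hc : ∀ j, ∃ u : ℤ, c j = (N : ℤ) ^ (e j) * u ∧ IsCoprime u (N : ℤ)) :
    ∃ L : Set ℤ, Function.Bijective (fun p : (Fin n → Fin N) × L =>
      ∑ j, c j * ((p.1 j : ℕ) : ℤ) + (p.2 : ℤ)) := by
  obtain ⟨M, hM⟩ : ∃ M, ∀ j, e j < M :=
    ⟨(Finset.univ.sup e) + 1, fun j => Nat.lt_succ_of_le (Finset.le_sup (Finset.mem_univ j))⟩
  let a : ℕ → ℤ := Function.extend e c (fun m => (N : ℤ) ^ m)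
  have hae : ∀ j, a (e j) = c j := fun j => he.extend_apply _ _ _
  have ha : ∀ m, ∃ u : ℤ, a m = (N : ℤ) ^ m * u ∧ IsCoprime u (N : ℤ) := by
    intro m
    by_cases hm : ∃ j, e j = m
    · obtain ⟨j, rfl⟩ := hm
      rw [hae]; exact hc j
    · exact ⟨1, by simp [a, Function.extend_apply' _ _ _ hm], isCoprime_one_left⟩
  have hb := aux_bij N hN a ha M
  let e' : Fin n → Fin M := fun j => ⟨e j, hM j⟩
  have he' : Function.Injective e' := fun x y h => he (congrArg Fin.val h)
  have hsum : ∀ (l : Fin n → Fin N) (l' : Fin M → Fin N), (∀ j, ((l' (e' j) : ℕ)) = 0) →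
      ∑ m : Fin M, a m * (((Function.extend e' l l' m : Fin N) : ℕ) : ℤ) =
      ∑ j, c j * ((l j : ℕ) : ℤ) + ∑ m : Fin M, a m * ((l' m : ℕ) : ℤ) := by
    intro l l' hl
    rw [← sub_eq_iff_eq_add, ← Finset.sum_sub_distrib]
    symm
    refine Finset.sum_of_injOn e' he'.injOn (by simp) ?_ ?_
    · intro m _ hm
      have : ¬ ∃ j, e' j = m := by simpa using hm
      rw [Function.extend_apply' _ _ _ this]; ring
    · intro j _
      rw [he'.extend_apply, hl j]
      have : a (e' j : ℕ) = c j := hae j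
      rw [this]; simp
  refine ⟨{z | ∃ (l' : Fin M → Fin N) (q : ℤ), (∀ j, ((l' (e' j) : ℕ)) = 0) ∧
    z = ∑ m : Fin M, a m * ((l' m : ℕ) : ℤ) + (N : ℤ) ^ M * q}, ?_, ?_⟩
  · rintro ⟨l, z, l₁, q, h1, hz⟩ ⟨k, w, k₁, r, h2, hw⟩ h
    simp only at h
    have h3 := @hb.1 (Function.extend e' l l₁, q) (Function.extend e' k k₁, r) (by
      simp only [hsum _ _ h1, hsum _ _ h2]
      rw [hz, hw] at h
      linear_combination h)
    rw [Prod.mk.injEq] at h3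
    have h4 : l = k := by
      funext j
      have := congrFun h3.1 (e' j)
      rwa [he'.extend_apply, he'.extend_apply] at this
    subst h4
    have h5 : z = w := by linear_combination h
    subst h5
    rfl
  · intro z
    obtain ⟨⟨l, q⟩, h⟩ := hb.2 z
    let l' : Fin M → Fin N := Function.extend e' (fun _ => ⟨0, hN.pos⟩) l
    have hl' : ∀ j, ((l' (e' j) : ℕ)) = 0 := by
      intro j
      simp only [l', he'.extend_apply]
    refine ⟨(fun j => l (e' j), ⟨_, l', q, hl', rfl⟩), ?_⟩
    simp only at h ⊢
    rw [← add_assoc, ← hsum _ _ hl', ← h]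
    congr 2
    funext m
    congr 3
    by_cases hm : ∃ j, e' j = m
    · obtain ⟨j, rfl⟩ := hm
      rw [he'.extend_apply]
    · rw [Function.extend_apply' _ _ _ hm]
      simp only [l']
      rw [Function.extend_apply' _ _ _ hm]


/-- Theorem 1.3: let `N` be a prime, `b k` integers with `|b k| ≥ 2`, `t k` nonzero
integers, `D k = {0,…,N-1} t k`, and
`s k = τ_N(b 0 ⋯ b k) − τ_N(N * t k)` (indices written from `0`).  Then for every
`k` the set `𝐃_k = D_k + b_k D_{k-1} + ⋯ + (b_k ⋯ b_1) D_0` is a direct sum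
(the representation map is injective) and an integer tile (there is `L ⊆ ℤ` with
`𝐃_k ⊕ L = ℤ`) if and only if `s i ≠ s j` for all `i ≠ j`. -/
theorem stmt4 (N : ℕ) (hN : N.Prime) (b t : ℕ → ℤ)
    (hb : ∀ k, 2 ≤ |b k|) (ht : ∀ k, t k ≠ 0)
    (s : ℕ → ℤ)
    (hs : ∀ k, s k = (padicValInt N (∏ i ∈ Finset.range (k + 1), b i) : ℤ)
        - (padicValInt N ((N : ℤ) * t k) : ℤ)) :
    (∀ k : ℕ,
        Function.Injective (fun l : Fin (k + 1) → Fin N =>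
          ∑ j : Fin (k + 1),
            (∏ i ∈ Finset.Ico ((j : ℕ) + 1) (k + 1), b i) * t (j : ℕ) *
              ((l j : ℕ) : ℤ)) ∧
        ∃ L : Set ℤ, ∀ z : ℤ,
          ∃! p : (Fin (k + 1) → Fin N) × L,
            z = (∑ j : Fin (k + 1),
                  (∏ i ∈ Finset.Ico ((j : ℕ) + 1) (k + 1), b i) * t (j : ℕ) *
                    ((p.1 j : ℕ) : ℤ)) + (p.2 : ℤ)) ↔
      ∀ i j : ℕ, i ≠ j → s i ≠ s j := by
  have := Fact.mk hN
  have hb0 : ∀ k, b k ≠ 0 := by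
    intro k h
    have := hb k
    rw [h] at this
    norm_num at this
  have hc0 : ∀ k j : ℕ, (∏ i ∈ Finset.Ico (j + 1) (k + 1), b i) * t j ≠ 0 := fun k j =>
    mul_ne_zero (Finset.prod_ne_zero_iff.2 fun i _ => hb0 i) (ht j)
  have hval : ∀ k j : ℕ, j ≤ k →
      (padicValInt N ((∏ i ∈ Finset.Ico (j + 1) (k + 1), b i) * t j) : ℤ) =
      padicValInt N (∏ i ∈ Finset.range (k + 1), b i) - s j - 1 := by
    intro k j hjk
    have hN0 : (N : ℤ) ≠ 0 := by exact_mod_cast hN.ne_zero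
    have h1 := Finset.prod_range_mul_prod_Ico b (show j + 1 ≤ k + 1 by omega)
    rw [hs j, ← h1, padicValInt.mul (Finset.prod_ne_zero_iff.2 fun i _ => hb0 i)
      (Finset.prod_ne_zero_iff.2 fun i _ => hb0 i), padicValInt.mul hN0 (ht j),
      padicValInt.mul (Finset.prod_ne_zero_iff.2 fun i _ => hb0 i) (ht j),
      padicValInt.self hN.one_lt]
    push_cast
    ring
  constructor
  · intro H i j hij hsij
    obtain ⟨-, L, hL⟩ := H (max i j)
    set k := max i j with hk
    have hik : i ≤ k := le_max_left _ _
    have hjk : j ≤ k := le_max_right _ _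
    let c : Fin (k + 1) → ℤ := fun m => (∏ i ∈ Finset.Ico ((m : ℕ) + 1) (k + 1), b i) * t (m : ℕ)
    have hbij : Function.Bijective (fun p : (Fin (k + 1) → Fin N) × L =>
        ∑ j, c j * ((p.1 j : ℕ) : ℤ) + (p.2 : ℤ)) := by
      rw [Function.bijective_iff_existsUnique]
      intro z
      obtain ⟨p, hp, hu⟩ := hL z
      exact ⟨p, hp.symm, fun y hy => hu y hy.symm⟩
    let i' : Fin (k + 1) := ⟨i, by omega⟩
    let j' : Fin (k + 1) := ⟨j, by omega⟩
    have hne : i' ≠ j' := fun h => hij (congrArg Fin.val h)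
    obtain ⟨u, hu, hu'⟩ := aux_decomp N hN (c i') (hc0 k i)
    obtain ⟨v, hv, hv'⟩ := aux_decomp N hN (c j') (hc0 k j)
    have hvv : padicValInt N (c i') = padicValInt N (c j') := by
      have h1 := hval k i hik
      have h2 := hval k j hjk
      rw [hsij, ← h2] at h1
      exact_mod_cast h1
    have h1 := aux_update N hN _ L j' u hu' (aux_update N hN c L i' v hv' hbij)
    have hd : ∃ d : Fin (k + 1) → ℤ, d i' = d j' ∧
        Function.Bijective (fun p : (Fin (k + 1) → Fin N) × L =>
        ∑ j, d j * ((p.1 j : ℕ) : ℤ) + (p.2 : ℤ)) := by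
      refine ⟨_, ?_, h1⟩
      rw [Function.update_of_ne hne, Function.update_self, Function.update_self,
        Function.update_of_ne hne.symm, hu, hv, hvv]
      ring
    obtain ⟨d, hdd, hdb⟩ := hd
    obtain ⟨⟨_, x⟩, -⟩ := hdb.2 0
    let z0 : Fin N := ⟨0, hN.pos⟩
    let z1 : Fin N := ⟨1, hN.one_lt⟩
    have hs1 : ∀ m : Fin (k + 1), ∑ j, d j * (((Function.update (fun _ => z0) m z1 :
        Fin (k + 1) → Fin N) j : ℕ) : ℤ) = d m := by
      intro m
      rw [Finset.sum_eq_single m]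
      · simp [z1]
      · intro y _ hy
        rw [Function.update_of_ne hy]; simp [z0]
      · simp
    have h2 := @hdb.1 (Function.update (fun _ => z0) i' z1, x)
      (Function.update (fun _ => z0) j' z1, x) (by simp only [hs1, hdd])
    have h3 := congrFun (congrArg Prod.fst h2) i'
    simp only [Function.update_self, Function.update_of_ne hne] at h3
    have := congrArg Fin.val h3
    simp [z0, z1] at this
  · intro H k
    obtain ⟨L, hL⟩ := aux_exists N hN (k + 1)
      (fun m => (∏ i ∈ Finset.Ico ((m : ℕ) + 1) (k + 1), b i) * t (m : ℕ))
      (fun m => padicValInt N ((∏ i ∈ Finset.Ico ((m : ℕ) + 1) (k + 1), b i) * t (m : ℕ)))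
      (by
        intro x y hxy
        by_contra hne
        have h1 := hval k x (by omega)
        have h2 := hval k y (by omega)
        simp only at hxy
        rw [hxy] at h1
        exact H x y (fun h => hne (Fin.ext h)) (by linarith))
      (fun j => aux_decomp N hN _ (hc0 k j))
    constructor
    · obtain ⟨⟨_, x⟩, -⟩ := hL.2 0
      intro l l' h
      simp only at h
      have := @hL.1 (l, x) (l', x) (by simp only [h])
      exact congrArg Prod.fst this
    · refine ⟨L, fun z => ?_⟩
      obtain ⟨p, hp, hu⟩ := (Function.bijective_iff_existsUnique _).1 hL z
      exact ⟨p, hp.symm, fun y hy => hu y hy.symm⟩
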